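/- arXiv:2301.11222 — 6 statements merged into one kernel-verified Lean document; each statement's English description precedes it below -/
import Mathlib

section
/- Let n be a positive integer, let k be a positive integer, and let π be a finite multiset of elements of T_n with |π| = k+2. Suppose there exist two distinct submultisets ρ_1 and ρ_2 of π with |ρ_1| = |ρ_2| = k+1 such that supp(ρ_1) and supp(ρ_2) are both chains under ⊴. Then either (A) supp(π) is a chain containing at least 2 elements, or (B/C/D) there exist two incomparable elements b, c ∈ supp(π) such that the set S = supp(π) \ {b,c} is a nonempty chain and every element x of S satisfies either (x ▷ b and x ▷ c) or (b ▷ x and c ▷ x). -/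
/-!
A submultiset of `P` with one element fewer is `P` with a single element removed, so two distinct
ones delete distinct elements `b ≠ c`, and `P = b + c + σ` (`exists_common_core`). Both `c + σ` and
`b + σ` are supported on chains, so the only pair of elements of `P` that may be incomparable is
`{b, c}`. If `b` and `c` are comparable, the support of `P` is a chain with at least the two elements
`b`, `c`. Otherwise neither `b` nor `c` occurs in `σ`, so the rest of the support is exactly the
support of `σ`, which is nonempty because `k ≥ 1`. Each of its elements is comparable with both `b`
and `c`, and by transitivity it cannot lie between them, hence is above both or below both.
-/

/-- The trapezoid `T_n`. -/
def inT (n : ℕ) (x : ℤ × ℤ) : Prop :=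
  1 ≤ x.1 ∧ x.1 ≤ 2*n+1 ∧ 1 ≤ x.2 ∧ x.2 ≤ 4*n+1-x.1

/-- The partial order `⊴` on the trapezoid: `(i,j) ⊴ (p,q)` iff `i ≤ p` and `q ≤ j ≤ p+q-i`. -/
def tle (a b : ℤ × ℤ) : Prop :=
  a.1 ≤ b.1 ∧ b.2 ≤ a.2 ∧ a.2 ≤ b.1 + b.2 - a.1

/-- `tgt a b` means `a ▷ b`, i.e. `b ⊴ a` and `a ≠ b`. -/
def tgt (a b : ℤ × ℤ) : Prop := tle b a ∧ a ≠ b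

/-- A finite set is a chain if its elements are pairwise comparable under `⊴`. -/
def isChainF (S : Finset (ℤ × ℤ)) : Prop := ∀ x ∈ S, ∀ y ∈ S, tle x y ∨ tle y x

theorem tle_refl (a : ℤ × ℤ) : tle a a := by
  unfold tle; omega

theorem tle_trans {a b c : ℤ × ℤ} (hab : tle a b) (hbc : tle b c) : tle a c := by
  unfold tle at *; omega

/-- Two distinct submultisets of codimension one arise from a common `σ` by adding back one of two
distinct elements. -/
theorem exists_common_core {α : Type*} [DecidableEq α] {P ρ₁ ρ₂ : Multiset α} {m : ℕ}
    (hP : Multiset.card P = m + 1) (h1 : ρ₁ ≤ P) (h2 : ρ₂ ≤ P) (hne : ρ₁ ≠ ρ₂)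
    (hc1 : Multiset.card ρ₁ = m) (hc2 : Multiset.card ρ₂ = m) :
    ∃ b c σ, b ≠ c ∧ P = b ::ₘ c ::ₘ σ ∧ ρ₁ = c ::ₘ σ ∧ ρ₂ = b ::ₘ σ := by
  obtain ⟨u, rfl⟩ := Multiset.le_iff_exists_add.1 h1
  obtain ⟨v, hv⟩ := Multiset.le_iff_exists_add.1 h2
  have hcard_u : Multiset.card u = 1 := by
    rw [Multiset.card_add] at hP; omega
  have hcard_v : Multiset.card v = 1 := by
    have h := congrArg Multiset.card hv
    rw [hP, Multiset.card_add] at h; omega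
  obtain ⟨b, rfl⟩ := Multiset.card_eq_one.1 hcard_u
  obtain ⟨c, rfl⟩ := Multiset.card_eq_one.1 hcard_v
  have hcons : b ::ₘ ρ₁ = c ::ₘ ρ₂ := by
    simpa only [Multiset.add_comm _ {_}, Multiset.singleton_add] using hv
  rcases Multiset.cons_eq_cons.1 hcons with ⟨_, h⟩ | ⟨hbc, σ, hs1, hs2⟩
  · exact absurd h hne
  · refine ⟨b, c, σ, hbc, ?_, hs1, hs2⟩
    rw [Multiset.add_comm, Multiset.singleton_add, hs1]

theorem stmt0 (n k : ℕ) (hn : 1 ≤ n) (hk : 1 ≤ k)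
    (P : Multiset (ℤ × ℤ)) (hPT : ∀ a ∈ P, inT n a)
    (hcard : Multiset.card P = k + 2)
    (ρ₁ ρ₂ : Multiset (ℤ × ℤ)) (h1 : ρ₁ ≤ P) (h2 : ρ₂ ≤ P) (hne : ρ₁ ≠ ρ₂)
    (hc1 : Multiset.card ρ₁ = k + 1) (hc2 : Multiset.card ρ₂ = k + 1)
    (hch1 : isChainF ρ₁.toFinset) (hch2 : isChainF ρ₂.toFinset) :
    (isChainF P.toFinset ∧ 2 ≤ P.toFinset.card) ∨
    (∃ b ∈ P.toFinset, ∃ c ∈ P.toFinset,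
      ¬ tle b c ∧ ¬ tle c b ∧
      (P.toFinset \ {b, c}).Nonempty ∧ isChainF (P.toFinset \ {b, c}) ∧
      ∀ x ∈ P.toFinset \ {b, c}, (tgt x b ∧ tgt x c) ∨ (tgt b x ∧ tgt c x)) := by
  obtain ⟨b, c, σ, hbc, rfl, rfl, rfl⟩ := exists_common_core hcard h1 h2 hne hc1 hc2
  have hσ : ∀ x ∈ σ, ∀ y ∈ σ, tle x y ∨ tle y x := fun x hx y hy =>
    hch1 x (by simp [hx]) y (by simp [hy])
  have hcσ : ∀ x ∈ σ, tle x c ∨ tle c x := fun x hx => hch1 x (by simp [hx]) c (by simp)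
  have hbσ : ∀ x ∈ σ, tle x b ∨ tle b x := fun x hx => hch2 x (by simp [hx]) b (by simp)
  by_cases hcomp : tle b c ∨ tle c b
  · left
    constructor
    · intro x hx y hy
      simp only [Multiset.mem_toFinset, Multiset.mem_cons] at hx hy
      rcases hx with rfl | rfl | hx <;> rcases hy with rfl | rfl | hy
      · exact Or.inl (tle_refl _)
      · exact hcomp
      · exact (hbσ y hy).symm
      · exact hcomp.symm
      · exact Or.inl (tle_refl _)
      · exact (hcσ y hy).symm
      · exact hbσ x hx
      · exact hcσ x hx
      · exact hσ x hx y hy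
    · rw [← Finset.card_pair hbc]
      refine Finset.card_le_card fun x hx => ?_
      simp only [Finset.mem_insert, Finset.mem_singleton] at hx
      rcases hx with rfl | rfl <;> simp
  · right
    have hbnot : b ∉ σ := fun h => hcomp (hcσ b h)
    have hcnot : c ∉ σ := fun h => hcomp (hbσ c h).symm
    have hS : (b ::ₘ c ::ₘ σ).toFinset \ {b, c} = σ.toFinset := by
      ext x
      simp only [Finset.mem_sdiff, Multiset.mem_toFinset, Multiset.mem_cons, Finset.mem_insert,
        Finset.mem_singleton]
      grind
    rw [not_or] at hcomp
    refine ⟨b, by simp, c, by simp, hcomp.1, hcomp.2, ?_⟩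
    rw [hS]
    refine ⟨?_, fun x hx y hy => hσ x (by simpa using hx) y (by simpa using hy), fun x hx => ?_⟩
    · have hpos : 0 < Multiset.card σ := by
        rw [Multiset.card_cons] at hc1; omega
      obtain ⟨x, hx⟩ := Multiset.card_pos_iff_exists_mem.1 hpos
      exact ⟨x, by simpa using hx⟩
    · rw [Multiset.mem_toFinset] at hx
      have hxb : x ≠ b := fun h => hbnot (h ▸ hx)
      have hxc : x ≠ c := fun h => hcnot (h ▸ hx)
      rcases hbσ x hx with h | h <;> rcases hcσ x hx with h' | h'
      · exact Or.inr ⟨⟨h, hxb.symm⟩, ⟨h', hxc.symm⟩⟩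
      · exact absurd (tle_trans h' h) hcomp.2
      · exact absurd (tle_trans h h') hcomp.1
      · exact Or.inl ⟨⟨h, hxb⟩, ⟨h', hxc⟩⟩
end

section
/- Let n and k be positive integers, let r, s >= 0 with 1 <= r+s <= k, and let a_1, …, a_r, b, c, d_1, …, d_s be distinct elements of T_n such that: a_1 ▷ … ▷ a_r and d_1 ▷ … ▷ d_s are chains; b and c are incomparable; if r >= 1 then a_r ▷ b and a_r ▷ c; and if s >= 1 then b ▷ d_1 and c ▷ d_1. Then the number of multisets π of elements of T_n with |π| = k+2, supp(π) = {a_1,…,a_r,b,c,d_1,…,d_s}, and with b and c each of multiplicity exactly 1 in π, equals the binomial coefficient C(k-1, r+s-1); moreover each such π has exactly two submultisets ρ with |ρ| = k+1 and supp(ρ) a chain, namely π with one copy of b removed and π with one copy of c removed. -/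
theorem tle_refl_s2 (x : ℤ × ℤ) : tle x x := by
  unfold tle; omega

/-- In the coordinates `i`, `-j`, `i + j` the relation `⊴` is the componentwise order. -/
theorem tle_trans_s2 {x y z : ℤ × ℤ} (h : tle x y) (h' : tle y z) : tle x z := by
  unfold tle at *; omega

/-- Multisets with support `S ∪ {b, c}` and simple `b`, `c` correspond to multisets on `S`,
by removing one copy of each element of the support. -/
theorem ncard_multisets {α : Type*} [DecidableEq α] (S : Finset α) (b c : α) (k : ℕ)
    (hb : b ∉ S) (hc : c ∉ S) (hbc : b ≠ c) (h1 : 1 ≤ S.card) (h2 : S.card ≤ k) :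
    {P : Multiset α | Multiset.card P = k + 2 ∧ P.toFinset = insert b (insert c S) ∧
        P.count b = 1 ∧ P.count c = 1}.ncard = Nat.choose (k - 1) (S.card - 1) := by
  let f : Sym S (k - S.card) → Multiset α :=
    fun Q => b ::ₘ c ::ₘ (S.val + (Q : Multiset S).map Subtype.val)
  have hf : Function.Injective f := by
    intro Q Q' h
    simp only [f, Multiset.cons_inj_right, add_right_inj] at h
    exact Sym.coe_injective (Multiset.map_injective Subtype.val_injective h)
  have hrange : {P : Multiset α | Multiset.card P = k + 2 ∧
      P.toFinset = insert b (insert c S) ∧ P.count b = 1 ∧ P.count c = 1} = Set.range f := by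
    ext P
    constructor
    · rintro ⟨hcard, hsupp, hPb, hPc⟩
      have hmem : ∀ x, x ∈ P ↔ x = b ∨ x = c ∨ x ∈ S := fun x => by
        rw [← Multiset.mem_toFinset, hsupp]; simp
      have hle : b ::ₘ c ::ₘ S.val ≤ P := by
        rw [Multiset.le_iff_subset]
        · intro x hx
          simpa [hmem] using hx
        · simp [hb, hc, hbc, S.nodup]
      obtain ⟨R, rfl⟩ := Multiset.le_iff_exists_add.1 hle
      have hSb : S.val.count b = 0 := Multiset.count_eq_zero.2 hb
      have hSc : S.val.count c = 0 := Multiset.count_eq_zero.2 hc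
      have hbR : b ∉ R := by
        rw [← Multiset.count_eq_zero]
        simp [hbc, hSb] at hPb
        simpa using hPb
      have hcR : c ∉ R := by
        rw [← Multiset.count_eq_zero]
        simp [hbc.symm, hSc] at hPc
        simpa using hPc
      have hRS : ∀ x ∈ R, x ∈ S := by
        intro x hx
        rcases (hmem x).1 (by simp [hx]) with rfl | rfl | h
        · exact absurd hx hbR
        · exact absurd hx hcR
        · exact h
      have hR : Multiset.card R = k - S.card := by
        simp at hcard
        omega
      lift R to Multiset S using hRS
      refine ⟨⟨R, by simpa using hR⟩, ?_⟩
      simp [f, Multiset.cons_add]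
    · rintro ⟨Q, rfl⟩
      have hQb : b ∉ (Q : Multiset S).map Subtype.val := by simp [hb]
      have hQc : c ∉ (Q : Multiset S).map Subtype.val := by simp [hc]
      have hSb : S.val.count b = 0 := Multiset.count_eq_zero.2 hb
      have hSc : S.val.count c = 0 := Multiset.count_eq_zero.2 hc
      refine ⟨?_, ?_, ?_, ?_⟩
      · simp [f]
        omega
      · ext x
        simp only [f, Multiset.mem_toFinset, Multiset.mem_cons, Multiset.mem_add,
          Multiset.mem_map, Finset.mem_insert, Finset.mem_val]
        constructor
        · rintro (h | h | h | ⟨y, -, rfl⟩)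
          · simp [h]
          · simp [h]
          · simp [h]
          · simp
        · tauto
      · simp only [f, Multiset.count_cons, Multiset.count_add, hSb,
          Multiset.count_eq_zero.2 hQb]
        simp [hbc]
      · simp only [f, Multiset.count_cons, Multiset.count_add, hSc,
          Multiset.count_eq_zero.2 hQc]
        simp [hbc.symm]
  rw [hrange, Set.ncard_range_of_injective hf, Nat.card_eq_fintype_card, Sym.card_sym_eq_choose,
    Fintype.card_coe]
  have e1 : S.card + (k - S.card) - 1 = k - 1 := by omega
  rw [e1]
  exact Nat.choose_symm_of_eq_add (by omega)

/-- The submultisets of `P` of colength one with chain support, when the support of `P` is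
`S ∪ {b, c}` with `b`, `c` simple and incomparable and both `S ∪ {b}` and `S ∪ {c}` chains. -/
theorem submultisets_eq (S : Finset (ℤ × ℤ)) (b c : ℤ × ℤ) (k : ℕ)
    (hbc : ¬ tle b c ∧ ¬ tle c b)
    (hSb : isChainF (insert b S)) (hSc : isChainF (insert c S))
    (P : Multiset (ℤ × ℤ)) (hcard : Multiset.card P = k + 2)
    (hsupp : P.toFinset = insert b (insert c S)) (hPb : P.count b = 1) (hPc : P.count c = 1) :
    {ρ : Multiset (ℤ × ℤ) | ρ ≤ P ∧ Multiset.card ρ = k + 1 ∧ isChainF ρ.toFinset}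
      = {P.erase b, P.erase c} := by
  have hmem : ∀ x, x ∈ P ↔ x = b ∨ x = c ∨ x ∈ S := fun x => by
    rw [← Multiset.mem_toFinset, hsupp]; simp
  have hbP : b ∈ P := by simp [hmem]
  have hcP : c ∈ P := by simp [hmem]
  have hb : b ∉ P.erase b := by
    rw [← Multiset.count_eq_zero, Multiset.count_erase_self, hPb]
  have hc : c ∉ P.erase c := by
    rw [← Multiset.count_eq_zero, Multiset.count_erase_self, hPc]
  ext ρ
  simp only [Set.mem_ofPred_eq, Set.mem_insert_iff, Set.mem_singleton_iff]
  constructor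
  · rintro ⟨hle, hρ, hch⟩
    have hlt : ρ < P := lt_of_le_of_ne hle (by rintro rfl; omega)
    obtain ⟨x, hx⟩ := Multiset.lt_iff_cons_le.1 hlt
    have hP : x ::ₘ ρ = P := Multiset.eq_of_le_of_card_le hx (by simp [hρ, hcard])
    by_cases hxb : x = b
    · left; rw [← hP, hxb, Multiset.erase_cons_head]
    by_cases hxc : x = c
    · right; rw [← hP, hxc, Multiset.erase_cons_head]
    have hbρ : b ∈ ρ := by
      rw [← hP] at hbP
      exact (Multiset.mem_cons.1 hbP).resolve_left (Ne.symm hxb)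
    have hcρ : c ∈ ρ := by
      rw [← hP] at hcP
      exact (Multiset.mem_cons.1 hcP).resolve_left (Ne.symm hxc)
    rcases hch b (by simpa using hbρ) c (by simpa using hcρ) with h | h
    · exact absurd h hbc.1
    · exact absurd h hbc.2
  · rintro (rfl | rfl)
    · refine ⟨Multiset.erase_le _ _, by rw [Multiset.card_erase_of_mem hbP, hcard]; rfl, ?_⟩
      have key : ∀ x ∈ (P.erase b).toFinset, x ∈ insert c S := by
        intro x hx
        rw [Multiset.mem_toFinset] at hx
        rcases (hmem x).1 (Multiset.mem_of_mem_erase hx) with rfl | h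
        · exact absurd hx hb
        · simpa using h
      exact fun x hx y hy => hSc x (key x hx) y (key y hy)
    · refine ⟨Multiset.erase_le _ _, by rw [Multiset.card_erase_of_mem hcP, hcard]; rfl, ?_⟩
      have key : ∀ x ∈ (P.erase c).toFinset, x ∈ insert b S := by
        intro x hx
        rw [Multiset.mem_toFinset] at hx
        rcases (hmem x).1 (Multiset.mem_of_mem_erase hx) with h | rfl | h
        · simp [h]
        · exact absurd hx hc
        · simp [h]
      exact fun x hx y hy => hSb x (key x hx) y (key y hy)

theorem tle_of_decreasing {m : ℕ} {f : Fin m → ℤ × ℤ}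
    (hf : ∀ p q : Fin m, p < q → tgt (f p) (f q)) {p q : Fin m} (h : p ≤ q) :
    tle (f q) (f p) := by
  rcases h.eq_or_lt with rfl | h
  · exact tle_refl_s2 _
  · exact (hf p q h).1

/-- The chains `a` and `e` together with one element `x` between them form a chain. -/
theorem isChainF_insert {r s : ℕ} {a : Fin r → ℤ × ℤ} {e : Fin s → ℤ × ℤ} {x : ℤ × ℤ}
    (hachain : ∀ p q : Fin r, p < q → tgt (a p) (a q))
    (hechain : ∀ p q : Fin s, p < q → tgt (e p) (e q))
    (hax : ∀ p, tle x (a p)) (hex : ∀ p, tle (e p) x) :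
    isChainF (insert x (Finset.image a Finset.univ ∪ Finset.image e Finset.univ)) := by
  intro y hy z hz
  simp only [Finset.mem_insert, Finset.mem_union, Finset.mem_image, Finset.mem_univ,
    true_and] at hy hz
  rcases hy with rfl | ⟨p, rfl⟩ | ⟨p, rfl⟩ <;> rcases hz with rfl | ⟨q, rfl⟩ | ⟨q, rfl⟩
  · exact Or.inl (tle_refl_s2 _)
  · exact Or.inl (hax q)
  · exact Or.inr (hex q)
  · exact Or.inr (hax p)
  · rcases le_total p q with h | h
    · exact Or.inr (tle_of_decreasing hachain h)
    · exact Or.inl (tle_of_decreasing hachain h)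
  · exact Or.inr (tle_trans_s2 (hex q) (hax p))
  · exact Or.inl (hex p)
  · exact Or.inl (tle_trans_s2 (hex p) (hax q))
  · rcases le_total p q with h | h
    · exact Or.inr (tle_of_decreasing hechain h)
    · exact Or.inl (tle_of_decreasing hechain h)

theorem stmt2 (n k r s : ℕ) (hn : 1 ≤ n) (hk : 1 ≤ k)
    (hrs1 : 1 ≤ r + s) (hrs2 : r + s ≤ k)
    (a : Fin r → ℤ × ℤ) (e : Fin s → ℤ × ℤ) (b c : ℤ × ℤ)
    (haT : ∀ p, inT n (a p)) (heT : ∀ p, inT n (e p))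
    (hbT : inT n b) (hcT : inT n c)
    (hachain : ∀ p q : Fin r, p < q → tgt (a p) (a q))
    (hechain : ∀ p q : Fin s, p < q → tgt (e p) (e q))
    (hbc : ¬ tle b c ∧ ¬ tle c b)
    (hab : ∀ h : 0 < r, tgt (a ⟨r-1, by omega⟩) b ∧ tgt (a ⟨r-1, by omega⟩) c)
    (hbd : ∀ h : 0 < s, tgt b (e ⟨0, h⟩) ∧ tgt c (e ⟨0, h⟩))
    (hdistinct :
      ((Finset.image a Finset.univ) ∪ {b, c} ∪ (Finset.image e Finset.univ)).card
        = r + s + 2) :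
    {P : Multiset (ℤ × ℤ) | Multiset.card P = k + 2 ∧
        P.toFinset = (Finset.image a Finset.univ) ∪ {b, c} ∪ (Finset.image e Finset.univ) ∧
        P.count b = 1 ∧ P.count c = 1}.ncard = Nat.choose (k-1) (r+s-1) ∧
    ∀ P : Multiset (ℤ × ℤ), Multiset.card P = k + 2 →
      P.toFinset = (Finset.image a Finset.univ) ∪ {b, c} ∪ (Finset.image e Finset.univ) →
      P.count b = 1 → P.count c = 1 →
      {ρ : Multiset (ℤ × ℤ) | ρ ≤ P ∧ Multiset.card ρ = k + 1 ∧ isChainF ρ.toFinset}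
        = {P.erase b, P.erase c} := by
  set S := Finset.image a Finset.univ ∪ Finset.image e Finset.univ with hS
  have hU : Finset.image a Finset.univ ∪ {b, c} ∪ Finset.image e Finset.univ
      = insert b (insert c S) := by
    ext x
    simp only [hS, Finset.mem_union, Finset.mem_insert, Finset.mem_singleton]
    tauto
  rw [hU] at hdistinct ⊢
  have hne : b ≠ c := by
    rintro rfl
    exact hbc.1 (tle_refl_s2 b)
  have hSle : S.card ≤ r + s := by
    have h1 : (Finset.image a Finset.univ).card ≤ r := by
      simpa using Finset.card_image_le (s := Finset.univ) (f := a)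
    have h2 : (Finset.image e Finset.univ).card ≤ s := by
      simpa using Finset.card_image_le (s := Finset.univ) (f := e)
    exact (Finset.card_union_le _ _).trans (add_le_add h1 h2)
  have hcS : c ∉ S := by
    intro h
    rw [Finset.insert_eq_of_mem h] at hdistinct
    have := Finset.card_insert_le b S
    omega
  have hbS : b ∉ S := by
    intro h
    rw [Finset.insert_eq_of_mem (Finset.mem_insert_of_mem h)] at hdistinct
    have := Finset.card_insert_le c S
    omega
  have hScard : S.card = r + s := by
    rw [Finset.card_insert_of_notMem (by simp [hne, hbS]),
      Finset.card_insert_of_notMem hcS] at hdistinct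
    omega
  -- `a_r` is the least of the `a p`, and `d₁` (index `0`) is the greatest of the `e p`.
  have ha : ∀ p, tle b (a p) ∧ tle c (a p) := by
    intro p
    have hr : 0 < r := p.pos
    have hp : tle (a ⟨r - 1, by omega⟩) (a p) :=
      tle_of_decreasing hachain (Fin.le_def.2 (by have := p.isLt; simp only; omega))
    exact ⟨tle_trans_s2 (hab hr).1.1 hp, tle_trans_s2 (hab hr).2.1 hp⟩
  have he : ∀ p, tle (e p) b ∧ tle (e p) c := by
    intro p
    have hs : 0 < s := p.pos
    have hp : tle (e p) (e ⟨0, hs⟩) :=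
      tle_of_decreasing hechain (Fin.le_def.2 (Nat.zero_le _))
    exact ⟨tle_trans_s2 hp (hbd hs).1.1, tle_trans_s2 hp (hbd hs).2.1⟩
  refine ⟨?_, ?_⟩
  · rw [← hScard]
    exact ncard_multisets S b c k hbS hcS hne (by omega) (by omega)
  · exact submultisets_eq S b c k hbc
      (isChainF_insert hachain hechain (fun p => (ha p).1) (fun p => (he p).1))
      (isChainF_insert hachain hechain (fun p => (ha p).2) (fun p => (he p).2))
end

section
/- For every positive integer n, the following identity of rational numbers holds: 3 * Σ_{i_1=4}^{2n+1} Σ_{i_2=3}^{i_1-1} Σ_{i_3=2}^{i_2-1} Σ_{i_4=1}^{i_3-1} (4n+1-i_1)(i_1-i_2+1)(i_2-i_3+1)(i_3-i_4+1) = (48n^8 + 672n^7 + 2296n^6 - 4613n^4 + 798n^3 + 1009n^2 - 210n)/280. -/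
/-!
Each of the four nested sums is evaluated by telescoping, from the innermost outwards. Writing
`P₁ = 1` and `P_{k+1}(x) = ∑_{k ≤ i ≤ x - 1} (x - i + 1) P_k(i)`, every `P_k` is a polynomial on
the range where it is used. Indeed, since the weight is `(x + 1) - i`, an antidifference in `i` of
the summand is `(x + 1) A_k(i) - B_k(i)`, where `A_k` and `B_k` are polynomial antidifferences of
`P_k(i)` and `i P_k(i)`. Normalised to vanish at `0`, these polynomials also vanish at `k - 1`, so
only the upper endpoint contributes (`sum_Icc_of_antidifference`). The outermost sum is of the same
kind, with the weight `(4n + 1) - i`.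
-/

/-- Telescoping over an integer interval: if `F` is an antidifference of `f` which vanishes just
below the interval, the sum of `f` is the value of `F` at the upper endpoint. The interval may be
empty, provided that its upper endpoint is exactly `a - 1`. -/
lemma sum_Icc_of_antidifference (f F : ℤ → ℚ) (a m : ℤ) (ham : a - 1 ≤ m) (h0 : F (a - 1) = 0)
    (h : ∀ i, F i - F (i - 1) = f i) : ∑ i ∈ Finset.Icc a m, f i = F m := by
  induction m, ham using Int.leInduction with
  | base => rw [h0, Finset.Icc_eq_empty (by omega), Finset.sum_empty]
  | succ m hm ih =>
    have hIcc : Finset.Icc a (m + 1) = insert (m + 1) (Finset.Icc a m) := by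
      ext j
      simp only [Finset.mem_Icc, Finset.mem_insert]
      omega
    have hF := h (m + 1)
    rw [add_sub_cancel_right] at hF
    rw [hIcc, Finset.sum_insert (by simp), ih]
    linarith

/-- The innermost sum `P₂`. -/
lemma sum_level_two (x : ℤ) (hx : 1 ≤ x) :
    ∑ i ∈ Finset.Icc (1 : ℤ) (x - 1), ((x : ℚ) - i + 1) = ((x : ℚ) - 1) * (x + 2) / 2 := by
  rw [sum_Icc_of_antidifference _ (fun i => ((x : ℚ) + 1) * i - i * (i + 1) / 2) 1 (x - 1)
    (by omega) (by norm_num) (fun i => by push_cast; ring)]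
  push_cast
  ring

/-- The sum `P₃`. -/
lemma sum_level_three (x : ℤ) (hx : 2 ≤ x) :
    ∑ i ∈ Finset.Icc (2 : ℤ) (x - 1), ((x : ℚ) - i + 1) * (((i : ℚ) - 1) * (i + 2) / 2)
      = ((x : ℚ) - 1) * (x - 2) * (x ^ 2 + 9 * x + 12) / 24 := by
  rw [sum_Icc_of_antidifference _
    (fun i => ((x : ℚ) + 1) * (i * (i - 1) * (i + 4) / 6)
      - (i + 1) * i * (i - 1) * (3 * i + 10) / 24) 2 (x - 1)
    (by omega) (by norm_num) (fun i => by push_cast; ring)]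
  push_cast
  ring

/-- The sum `P₄`. -/
lemma sum_level_four (x : ℤ) (hx : 3 ≤ x) :
    ∑ i ∈ Finset.Icc (3 : ℤ) (x - 1),
        ((x : ℚ) - i + 1) * (((i : ℚ) - 1) * (i - 2) * (i ^ 2 + 9 * i + 12) / 24)
      = ((x : ℚ) - 1) * (x - 2) * (x - 3) * (x + 6) * (x ^ 2 + 15 * x + 20) / 720 := by
  rw [sum_Icc_of_antidifference _
    (fun i => ((x : ℚ) + 1) * (i * (i - 1) * (i - 2) * (i ^ 2 + 13 * i + 32) / 120)
      - (i + 1) * i * (i - 1) * (i - 2) * (5 * i ^ 2 + 61 * i + 132) / 720) 3 (x - 1)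
    (by omega) (by norm_num) (fun i => by push_cast; ring)]
  push_cast
  ring

theorem stmt10 (n : ℕ) (hn : 1 ≤ n) :
    3 * ∑ i1 ∈ Finset.Icc (4:ℤ) (2*n+1), ∑ i2 ∈ Finset.Icc (3:ℤ) (i1-1),
        ∑ i3 ∈ Finset.Icc (2:ℤ) (i2-1), ∑ i4 ∈ Finset.Icc (1:ℤ) (i3-1),
          (((4*n+1-i1)*(i1-i2+1)*(i2-i3+1)*(i3-i4+1) : ℤ) : ℚ)
      = (48*(n:ℚ)^8 + 672*(n:ℚ)^7 + 2296*(n:ℚ)^6 - 4613*(n:ℚ)^4 + 798*(n:ℚ)^3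
          + 1009*(n:ℚ)^2 - 210*(n:ℚ))/280 := by
  have hinner : ∀ i1 ∈ Finset.Icc (4:ℤ) (2*n+1), ∑ i2 ∈ Finset.Icc (3:ℤ) (i1-1),
      ∑ i3 ∈ Finset.Icc (2:ℤ) (i2-1), ∑ i4 ∈ Finset.Icc (1:ℤ) (i3-1),
        (((4*n+1-i1)*(i1-i2+1)*(i2-i3+1)*(i3-i4+1) : ℤ) : ℚ)
      = (4*(n:ℚ)+1-i1) * (((i1:ℚ) - 1) * (i1 - 2) * (i1 - 3) * (i1 + 6)
          * (i1 ^ 2 + 15 * i1 + 20) / 720) := by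
    intro i1 h1
    rw [Finset.mem_Icc] at h1
    rw [← sum_level_four i1 (by omega), Finset.mul_sum]
    refine Finset.sum_congr rfl fun i2 h2 => ?_
    rw [Finset.mem_Icc] at h2
    rw [← sum_level_three i2 (by omega), Finset.mul_sum, Finset.mul_sum]
    refine Finset.sum_congr rfl fun i3 h3 => ?_
    rw [Finset.mem_Icc] at h3
    rw [← sum_level_two i3 (by omega), Finset.mul_sum, Finset.mul_sum, Finset.mul_sum]
    refine Finset.sum_congr rfl fun i4 _ => ?_
    push_cast
    ring
  -- For `n = 1` the outer interval is `[4, 3]`, the only empty case that telescoping allows.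
  rw [Finset.sum_congr rfl hinner, sum_Icc_of_antidifference _
    (fun i => (4 * (n : ℚ) + 1)
        * (i * (i - 1) * (i - 2) * (i - 3) * (i + 3) * (i + 8) * (i + 16) / 5040)
      - (i + 1) * i * (i - 1) * (i - 2) * (i - 3)
        * (7 * i ^ 3 + 183 * i ^ 2 + 1286 * i + 2232) / 40320) 4 (2 * n + 1)
    (by omega) (by norm_num) (fun i => by push_cast; ring)]
  push_cast
  ring
end

section
/- For every positive integer n, the following identity of rational numbers holds: 6 * Σ_{i_1=3}^{2n+1} Σ_{i_2=2}^{i_1-1} Σ_{i_3=1}^{i_2-1} (4n+1-i_1)(i_1-i_2+1)(i_2-i_3+1) = (56n^6 + 420n^5 + 590n^4 - 225n^3 - 151n^2 + 30n)/15. -/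
/-!
The triple sum is evaluated from the inside out. At each stage the summand is a polynomial in the
summation index, and an explicit polynomial antidifference (obtained from the power-sum formulas)
is supplied to the telescoping lemma `sum_Icc_telescope`. With `b = i2` and `a = i1`, the innermost
sum is `(b - 1) * (b + 2) / 2`, and the double sum is `(a - 1) * (a - 2) * (a ^ 2 + 9 * a + 12) / 24`.
-/

/-- Telescoping over an integer interval. The bound `a - 1 ≤ b` includes the empty interval
`b = a - 1`, where both sides vanish. -/
lemma sum_Icc_telescope (f : ℤ → ℚ) (F : ℚ → ℚ) (a b : ℤ) (hab : a - 1 ≤ b)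
    (h : ∀ x : ℤ, f x = F x - F (x - 1)) :
    ∑ x ∈ Finset.Icc a b, f x = F b - F (a - 1) := by
  induction b, hab using Int.leInduction with
  | base => simp
  | succ k hk ih =>
    have hI : Finset.Icc a (k + 1) = insert (k + 1) (Finset.Icc a k) := by
      ext x
      simp only [Finset.mem_Icc, Finset.mem_insert]
      omega
    rw [hI, Finset.sum_insert (by simp), ih, h]
    push_cast
    ring_nf

lemma sum_over_i3 (u : ℚ) (b : ℤ) (hb : 1 ≤ b) :
    ∑ c ∈ Finset.Icc (1 : ℤ) (b - 1), u * ((b : ℚ) - c + 1)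
      = u * (((b : ℚ) - 1) * (b + 2) / 2) := by
  rw [sum_Icc_telescope _ (fun x => u * (x * (b + 1) - x * (x + 1) / 2)) _ _ (by omega)
    (fun x => by ring)]
  push_cast
  ring

lemma sum_over_i2 (u : ℚ) (a : ℤ) (ha : 2 ≤ a) :
    ∑ b ∈ Finset.Icc (2 : ℤ) (a - 1), u * ((a : ℚ) - b + 1) * (((b : ℚ) - 1) * (b + 2) / 2)
      = u * (((a : ℚ) - 1) * (a - 2) * (a ^ 2 + 9 * a + 12) / 24) := by
  -- The summand is `u / 2` times `-b ^ 3 + a * b ^ 2 + (a + 3) * b - 2 * (a + 1)`.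
  rw [sum_Icc_telescope _ (fun x => u / 2 * (-(x ^ 2 * (x + 1) ^ 2 / 4)
    + a * (x * (x + 1) * (2 * x + 1) / 6) + (a + 3) * (x * (x + 1) / 2) - 2 * (a + 1) * x)) _ _
    (by omega) (fun x => by ring)]
  push_cast
  ring

theorem stmt11 (n : ℕ) (hn : 1 ≤ n) :
    6 * ∑ i1 ∈ Finset.Icc (3:ℤ) (2*n+1), ∑ i2 ∈ Finset.Icc (2:ℤ) (i1-1),
        ∑ i3 ∈ Finset.Icc (1:ℤ) (i2-1),
          (((4*n+1-i1)*(i1-i2+1)*(i2-i3+1) : ℤ) : ℚ)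
      = (56*(n:ℚ)^6 + 420*(n:ℚ)^5 + 590*(n:ℚ)^4 - 225*(n:ℚ)^3 - 151*(n:ℚ)^2
          + 30*(n:ℚ))/15 := by
  have key : ∀ a ∈ Finset.Icc (3 : ℤ) (2 * n + 1),
      ∑ b ∈ Finset.Icc (2 : ℤ) (a - 1), ∑ c ∈ Finset.Icc (1 : ℤ) (b - 1),
        (((4 * n + 1 - a) * (a - b + 1) * (b - c + 1) : ℤ) : ℚ)
      = (4 * (n : ℚ) + 1 - a) * (((a : ℚ) - 1) * (a - 2) * (a ^ 2 + 9 * a + 12) / 24) := by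
    intro a ha
    rw [Finset.mem_Icc] at ha
    rw [← sum_over_i2 _ a (by omega)]
    refine Finset.sum_congr rfl fun b hb => ?_
    rw [Finset.mem_Icc] at hb
    rw [← sum_over_i3 _ b (by omega)]
    refine Finset.sum_congr rfl fun c _ => ?_
    push_cast
    ring
  rw [Finset.sum_congr rfl key]
  -- The double sum expands to `(a ^ 4 + 6 * a ^ 3 - 13 * a ^ 2 - 18 * a + 24) / 24`; the
  -- antidifference combines the power sums of exponents 1 to 5.
  rw [sum_Icc_telescope _ (fun x => ((4 * (n : ℚ) + 1)
      * (x * (x + 1) * (2 * x + 1) * (3 * x ^ 2 + 3 * x - 1) / 30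
        + 6 * (x ^ 2 * (x + 1) ^ 2 / 4) - 13 * (x * (x + 1) * (2 * x + 1) / 6)
        - 18 * (x * (x + 1) / 2) + 24 * x)
      - (x ^ 2 * (x + 1) ^ 2 * (2 * x ^ 2 + 2 * x - 1) / 12
        + 6 * (x * (x + 1) * (2 * x + 1) * (3 * x ^ 2 + 3 * x - 1) / 30)
        - 13 * (x ^ 2 * (x + 1) ^ 2 / 4) - 18 * (x * (x + 1) * (2 * x + 1) / 6)
        + 24 * (x * (x + 1) / 2))) / 24) _ _ (by omega) (fun x => by ring)]
  push_cast
  ring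
end

section
/- For every positive integer n, the following identity of rational numbers holds: Σ_{d=1}^{2n-1} Σ_{ℓ=d+2}^{2n+1} Σ_{i_1=2}^{ℓ-d} Σ_{i_2=1}^{i_1-1} (4n+1-ℓ-d)(ℓ-d-i_1+1)(i_1-i_2+1) = (16n^7 + 112n^6 + 160n^5 - 20n^4 - 101n^3 - 2n^2 + 15n)/90. -/
/-!
Each of the four nested sums telescopes. With `m = ℓ - d`, the two inner sums give
`T m = C(m+3,4) - C(m+1,2)`. Put `U m = C(m+4,5) - C(m+2,3)` and `V m = C(m+5,6) - C(m+3,4)`, so that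
`U` is the partial sum of `T` and `V` that of `U`. With `M = 2n+1-d`, summation by parts evaluates
the sum over `ℓ` as `(M-1) U M + V (M-1)`, which is the backward difference of `(M-1) V M`; hence the
whole sum is `(2n-1) V (2n)`. The antidifferences are given as explicit polynomials and fed to
`sum_Icc_eq_sub`.
-/

/-- Discrete fundamental theorem of calculus on an integer interval; the case `a = b + 1` is the
empty sum. -/
theorem sum_Icc_eq_sub (F f : ℤ → ℚ) (h : ∀ x, F x - F (x - 1) = f x) {a b : ℤ}
    (hab : a - 1 ≤ b) : ∑ x ∈ Finset.Icc a b, f x = F b - F (a - 1) := by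
  induction b, hab using Int.leInduction with
  | base => simp
  | succ k hk ih =>
    have e : Finset.Icc a (k + 1) = insert (k + 1) (Finset.Icc a k) := by
      ext x
      simp only [Finset.mem_insert, Finset.mem_Icc]
      omega
    have h1 := h (k + 1)
    rw [add_sub_cancel_right] at h1
    rw [e, Finset.sum_insert (by simp), ih, ← h1]
    ring

/-- The polynomial `C(m+3,4) - C(m+1,2)`. -/
def polyT (m : ℚ) : ℚ := (m - 1) * m * (m + 1) * (m + 6) / 24

/-- The polynomial `C(m+4,5) - C(m+2,3)`, the partial sum of `polyT`. -/
def polyU (m : ℚ) : ℚ := (m - 1) * m * (m + 1) * (m + 2) * (m + 8) / 120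

/-- The polynomial `C(m+5,6) - C(m+3,4)`, the partial sum of `polyU`. -/
def polyV (m : ℚ) : ℚ := (m - 1) * m * (m + 1) * (m + 2) * (m + 3) * (m + 10) / 720

theorem sum_i2 (c : ℚ) {i : ℤ} (hi : 1 ≤ i) :
    ∑ j ∈ Finset.Icc (1 : ℤ) (i - 1), c * ((i : ℚ) - j + 1) = c * ((i - 1) * (i + 2) / 2) := by
  rw [sum_Icc_eq_sub (fun j => c * ((i + 1) * j - j * (j + 1) / 2)) _
    (fun x => by push_cast; ring) (by omega)]
  push_cast
  ring

theorem sum_i1 (c : ℚ) {m : ℤ} (hm : 1 ≤ m) :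
    ∑ i ∈ Finset.Icc (2 : ℤ) m, c * ((m : ℚ) - i + 1) * (((i : ℚ) - 1) * (i + 2) / 2)
      = c * polyT m := by
  -- `(i-1)(i+2)/2` and `i(i-1)(i+2)/2` are summed separately by the power-sum formulas.
  rw [sum_Icc_eq_sub (fun i => c * ((m + 1) *
      ((i * (i + 1) * (2 * i + 1) / 6 + i * (i + 1) / 2 - 2 * i) / 2)
      - (i ^ 2 * (i + 1) ^ 2 / 4 + i * (i + 1) * (2 * i + 1) / 6 - i * (i + 1)) / 2)) _
    (fun x => by push_cast; ring) (by omega)]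
  push_cast
  unfold polyT
  ring

theorem sum_l (n d : ℤ) (hd : d ≤ 2 * n) :
    ∑ l ∈ Finset.Icc (d + 2) (2 * n + 1), (4 * (n : ℚ) + 1 - l - d) * polyT (l - d)
      = (2 * n - d) * polyU (2 * n + 1 - d) + polyV (2 * n - d) := by
  rw [sum_Icc_eq_sub (fun l => (4 * n + 1 - l - d) * polyU (l - d) + polyV (l - d - 1)) _
    (fun x => by simp only [polyT, polyU, polyV]; push_cast; ring) (by omega)]
  simp only [polyU, polyV]
  push_cast
  ring

theorem sum_d (n : ℤ) (hn : 1 ≤ n) :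
    ∑ d ∈ Finset.Icc (1 : ℤ) (2 * n - 1),
      ((2 * (n : ℚ) - d) * polyU (2 * n + 1 - d) + polyV (2 * n - d))
      = (2 * n - 1) * polyV (2 * n) := by
  rw [sum_Icc_eq_sub (fun d => -((2 * n - d - 1) * polyV (2 * n - d))) _
    (fun x => by simp only [polyU, polyV]; push_cast; ring) (by omega)]
  simp only [polyV]
  push_cast
  ring

theorem stmt15 (n : ℕ) (hn : 1 ≤ n) :
    ∑ d ∈ Finset.Icc (1:ℤ) (2*n-1), ∑ ℓ ∈ Finset.Icc (d+2) (2*n+1),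
        ∑ i1 ∈ Finset.Icc (2:ℤ) (ℓ-d), ∑ i2 ∈ Finset.Icc (1:ℤ) (i1-1),
          (((4*n+1-ℓ-d)*(ℓ-d-i1+1)*(i1-i2+1) : ℤ) : ℚ)
      = (16*(n:ℚ)^7 + 112*(n:ℚ)^6 + 160*(n:ℚ)^5 - 20*(n:ℚ)^4 - 101*(n:ℚ)^3
          - 2*(n:ℚ)^2 + 15*(n:ℚ))/90 := by
  have key : ∀ d ∈ Finset.Icc (1:ℤ) (2*n-1), ∑ ℓ ∈ Finset.Icc (d+2) (2*n+1),
        ∑ i1 ∈ Finset.Icc (2:ℤ) (ℓ-d), ∑ i2 ∈ Finset.Icc (1:ℤ) (i1-1),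
          (((4*n+1-ℓ-d)*(ℓ-d-i1+1)*(i1-i2+1) : ℤ) : ℚ)
      = (2 * ((n : ℤ) : ℚ) - d) * polyU (2 * (n : ℤ) + 1 - d) + polyV (2 * (n : ℤ) - d) := by
    intro d hd
    rw [Finset.mem_Icc] at hd
    rw [← sum_l n d (by omega)]
    refine Finset.sum_congr rfl fun l hl => ?_
    rw [Finset.mem_Icc] at hl
    have h1 := sum_i1 (4 * ((n : ℤ) : ℚ) + 1 - l - d) (m := l - d) (by omega)
    rw [Int.cast_sub] at h1
    rw [← h1]
    refine Finset.sum_congr rfl fun i hi => ?_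
    rw [Finset.mem_Icc] at hi
    rw [← sum_i2 _ (by omega)]
    refine Finset.sum_congr rfl fun j _ => ?_
    push_cast
    ring
  rw [Finset.sum_congr rfl key, sum_d n (by omega)]
  simp only [polyV]
  push_cast
  ring
end

section
/- Let n be a positive integer. For a multiset π of elements of T_n, let e(π) denote the number of submultisets ρ of π with |ρ| = 3 such that supp(ρ) is a chain under ⊴, and set N(π) = max(e(π) - 1, 0). Then the sum of N(π) over all multisets π of elements of T_n with |π| = 4 equals (7(10n-1)/4) * C(2n+6, 7), where C(2n+6,7) is a binomial coefficient; in particular for n = 1 this sum equals 126. -/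
/-- `e n P` is the number of submultisets `ρ ≤ P` with `|ρ| = 3` whose support is a
chain under `⊴`. -/
noncomputable def e (P : Multiset (ℤ × ℤ)) : ℕ :=
  {ρ : Multiset (ℤ × ℤ) | ρ ≤ P ∧ Multiset.card ρ = 3 ∧ isChainF ρ.toFinset}.ncard

/-- `N P = max (e P - 1, 0)`, the number of excess embeddings. -/
noncomputable def N (P : Multiset (ℤ × ℤ)) : ℕ := max (e P - 1) 0

/-- The total excess `N_T`: the sum of `N P` over all multisets `P` of elements of the
trapezoid `T_n` with `|P| = 4`. -/
noncomputable def NT (n : ℕ) : ℕ :=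
  ∑ᶠ P ∈ {P : Multiset (ℤ × ℤ) | Multiset.card P = 4 ∧ ∀ a ∈ P, inT n a}, N P

/-! ### Indicators, the index set, and one-variable summation -/

/-- Incomparability for `⊴`, oriented by increasing `i + j`: in the coordinates `(i + j, -j)`, where
`⊴` is the product order, the first coordinate increases strictly and the second one decreases
strictly. -/
def inc (a b : ℤ × ℤ) : Prop := a.1 + a.2 < b.1 + b.2 ∧ a.2 < b.2

instance (a b : ℤ × ℤ) : Decidable (tle a b) := by unfold tle; infer_instance
instance (a b : ℤ × ℤ) : Decidable (inc a b) := by unfold inc; infer_instance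

/-- Indicator of `a ⊴ b`. -/
def tl (a b : ℤ × ℤ) : ℚ := if tle a b then 1 else 0

/-- Indicator of `inc a b`. -/
def ic (a b : ℤ × ℤ) : ℚ := if inc a b then 1 else 0

/-- Indicator of `a = b`. -/
def eqi (a b : ℤ × ℤ) : ℚ := if a = b then 1 else 0

/-- The trapezoid `T_n` as a finite set. -/
noncomputable def TF (n : ℕ) : Finset (ℤ × ℤ) :=
  (Finset.Icc (1 : ℤ) (2 * n + 1) ×ˢ Finset.Icc (1 : ℤ) (4 * n)).filter
    (fun x => x.2 ≤ 4 * n + 1 - x.1)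

theorem mem_TF (n : ℕ) (x : ℤ × ℤ) : x ∈ TF n ↔ inT n x := by
  simp only [TF, inT, Finset.mem_filter, Finset.mem_product, Finset.mem_Icc]
  omega

theorem sum_Icc_eq (f F : ℤ → ℚ) (h0 : F 0 = 0) (hs : ∀ k, F k - F (k - 1) = f k)
    (m : ℤ) (hm : 0 ≤ m) : ∑ r ∈ Finset.Icc 1 m, f r = F m := by
  induction m, hm using Int.leInduction with
  | base => simp [h0]
  | succ k hk ih =>
    have : Finset.Icc 1 (k + 1) = insert (k + 1) (Finset.Icc 1 k) := by
      ext x; simp only [Finset.mem_insert, Finset.mem_Icc]; omega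
    rw [this, Finset.sum_insert (by simp), ih, ← hs (k + 1)]
    simp

theorem sum_Icc_const (a b : ℤ) (h : a ≤ b + 1) (c : ℚ) :
    ∑ _r ∈ Finset.Icc a b, c = ((b : ℚ) + 1 - a) * c := by
  rw [Finset.sum_const, Int.card_Icc, nsmul_eq_mul]
  congr 1
  have : ((b + 1 - a).toNat : ℤ) = b + 1 - a := Int.toNat_of_nonneg (by omega)
  exact_mod_cast congrArg (Int.cast : ℤ → ℚ) this

/-- Summation against the weights `m - r + 1` inverts the second difference. -/
theorem sum_Icc_dbl (φ Φ : ℤ → ℚ) (h0 : Φ 0 = 0) (h1 : Φ (-1) = 0)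
    (hs : ∀ k, Φ k - 2 * Φ (k - 1) + Φ (k - 2) = φ k) (m : ℤ) (hm : 0 ≤ m) :
    ∑ r ∈ Finset.Icc 1 m, ((m : ℚ) - r + 1) * φ r = Φ m := by
  -- the antidifference in the upper limit `k`, for fixed weight parameter `m`
  have := sum_Icc_eq (fun r => ((m : ℚ) - r + 1) * φ r)
    (fun k => ((m : ℚ) - k + 1) * (Φ k - Φ (k - 1)) + Φ (k - 1)) (by simp [h0, h1])
    (by
      intro k
      have h2 : k - 1 - 1 = k - 2 := by ring
      simp only [h2, ← hs k]
      push_cast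
      ring) m hm
  rw [this]
  ring

/-! ### Sums over the trapezoid -/

theorem sum_TF (n : ℕ) (φ : ℤ → ℚ) : ∑ x ∈ TF n, φ x.1
    = ∑ i ∈ Finset.Icc (1 : ℤ) (2 * n + 1), ((4 * n + 1 : ℚ) - i) * φ i := by
  have : ∀ i ∈ Finset.Icc (1 : ℤ) (2 * n + 1), ((4 * n + 1 : ℚ) - i) * φ i
      = ∑ _j ∈ Finset.Icc (1 : ℤ) (4 * n + 1 - i), φ i := by
    intro i hi
    rw [Finset.mem_Icc] at hi
    rw [sum_Icc_const _ _ (by omega)]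
    push_cast
    ring
  rw [Finset.sum_congr rfl this, Finset.sum_sigma']
  refine Finset.sum_nbij' (fun x => ⟨x.1, x.2⟩) (fun x => (x.1, x.2)) ?_ ?_ ?_ ?_ ?_
  · intro x hx
    simp only [mem_TF, inT, Finset.mem_sigma, Finset.mem_Icc] at hx ⊢
    omega
  · intro x hx
    simp only [mem_TF, inT, Finset.mem_sigma, Finset.mem_Icc] at hx ⊢
    omega
  · intro x _; rfl
  · intro x _; rfl
  · intro x _; rfl

/-- The down-set of a point of rank `i` is a full triangle, with `i - r + 1` points of rank `r`.
The point `M` itself may have rank `≤ 0`, in which case nothing lies below it. -/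
theorem tl_sum (n : ℕ) (φ Φ : ℤ → ℚ) (h0 : Φ 0 = 0) (h1 : Φ (-1) = 0)
    (hs : ∀ k, Φ k - 2 * Φ (k - 1) + Φ (k - 2) = φ k)
    (M : ℤ × ℤ) (hM1 : M.1 ≤ 2 * n + 1) (hM2 : 1 ≤ M.2) (hM3 : M.1 + M.2 ≤ 4 * n + 1) :
    ∑ x ∈ TF n, tl x M * φ x.1 = if 1 ≤ M.1 then Φ M.1 else 0 := by
  have key : ∑ x ∈ TF n, tl x M * φ x.1
      = ∑ r ∈ Finset.Icc 1 M.1, ((M.1 : ℚ) - r + 1) * φ r := by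
    have : ∀ r ∈ Finset.Icc 1 M.1, ((M.1 : ℚ) - r + 1) * φ r
        = ∑ _j ∈ Finset.Icc M.2 (M.1 + M.2 - r), φ r := by
      intro i hi
      rw [Finset.mem_Icc] at hi
      rw [sum_Icc_const _ _ (by omega)]
      push_cast
      ring
    rw [Finset.sum_congr rfl this, Finset.sum_sigma']
    simp only [tl, ite_mul, one_mul, zero_mul]
    rw [← Finset.sum_filter]
    refine Finset.sum_nbij' (fun x => ⟨x.1, x.2⟩) (fun x => (x.1, x.2)) ?_ ?_ ?_ ?_ ?_
    · intro x hx
      simp only [mem_TF, Finset.mem_filter, Finset.mem_sigma, Finset.mem_Icc] at hx ⊢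
      simp only [inT, tle] at hx ⊢
      omega
    · intro x hx
      simp only [mem_TF, Finset.mem_filter, Finset.mem_sigma, Finset.mem_Icc] at hx ⊢
      simp only [inT, tle] at hx ⊢
      omega
    · intro x _; rfl
    · intro x _; rfl
    · intro x _; rfl
  rw [key]
  split_ifs with h
  · exact sum_Icc_dbl φ Φ h0 h1 hs M.1 (by omega)
  · rw [Finset.Icc_eq_empty (by omega), Finset.sum_empty]

theorem tl_sum_mem (n : ℕ) (φ Φ : ℤ → ℚ) (h0 : Φ 0 = 0) (h1 : Φ (-1) = 0)
    (hs : ∀ k, Φ k - 2 * Φ (k - 1) + Φ (k - 2) = φ k) (M : ℤ × ℤ) (hM : M ∈ TF n) :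
    ∑ x ∈ TF n, tl x M * φ x.1 = Φ M.1 := by
  rw [mem_TF, inT] at hM
  rw [tl_sum n φ Φ h0 h1 hs M (by omega) (by omega) (by omega), if_pos hM.1]

theorem tl_sum_eqi (n : ℕ) (g : ℤ × ℤ → ℚ) (M : ℤ × ℤ) (hM : M ∈ TF n) :
    ∑ x ∈ TF n, tl x M * (eqi x M * g x) = g M := by
  rw [Finset.sum_eq_single_of_mem M hM]
  · have : tle M M := by unfold tle; omega
    simp [tl, eqi, this]
  · intro b _ hb
    simp [eqi, hb]

/-- Number of weak chains `a ⊴ b` with top `b` of rank `i`. -/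
def A2 (i : ℤ) : ℚ := i * (i + 1) / 2
/-- Number of weak chains of three elements with top of rank `i`. -/
def A3 (i : ℤ) : ℚ := i * (i + 1) * (i + 2) * (i + 3) / 24
/-- Number of weak chains of four elements with top of rank `i`. -/
def A4 (i : ℤ) : ℚ := i * (i + 1) * (i + 2) * (i + 3) * (i + 4) * (i + 5) / 720

theorem sum_A2 (n : ℕ) (M : ℤ × ℤ) (hM : M ∈ TF n) : ∑ x ∈ TF n, tl x M = A2 M.1 := by
  have := tl_sum_mem n (fun _ => 1) A2 (by simp [A2]) (by simp [A2])
    (by intro k; simp only [A2]; push_cast; ring) M hM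
  simpa using this

theorem A3_diff (k : ℤ) : A3 k - 2 * A3 (k - 1) + A3 (k - 2) = A2 k := by
  simp only [A2, A3]; push_cast; ring

theorem sum_A3 (n : ℕ) (M : ℤ × ℤ) (hM : M ∈ TF n) : ∑ x ∈ TF n, tl x M * A2 x.1 = A3 M.1 :=
  tl_sum_mem n A2 A3 (by simp [A3]) (by simp [A3]) A3_diff M hM

theorem sum_A4 (n : ℕ) (M : ℤ × ℤ) (hM : M ∈ TF n) : ∑ x ∈ TF n, tl x M * A3 x.1 = A4 M.1 :=
  tl_sum_mem n A3 A4 (by simp [A4]) (by simp [A4])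
    (by intro k; simp only [A3, A4]; push_cast; ring) M hM

/-! ### The four kinds of contribution -/

/-- Contribution of the chains: a weak chain `a ⊴ b ⊴ c ⊴ d` counts once for each strict step. -/
def F1 (a b c d : ℤ × ℤ) : ℚ := tl c d * (tl b c * (tl a b * (3 - eqi a b - eqi b c - eqi c d)))
/-- An incomparable pair `c, d` above the chain `a ⊴ b`. -/
def F2 (a b c d : ℤ × ℤ) : ℚ := ic c d * (tl b c * tl b d * tl a b)
/-- An incomparable pair `b, c` between `a` and `d`. -/
def F3 (a b c d : ℤ × ℤ) : ℚ := ic b c * tl b d * tl c d * (tl a b * tl a c)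
/-- An incomparable pair `a, b` below the chain `c ⊴ d`. -/
def F4 (a b c d : ℤ × ℤ) : ℚ := tl c d * (ic a b * tl a c * tl b c)

theorem sum_F1 (n : ℕ) :
    ∑ d ∈ TF n, ∑ c ∈ TF n, ∑ b ∈ TF n, ∑ a ∈ TF n, F1 a b c d
      = ∑ d ∈ TF n, 3 * (A4 d.1 - A3 d.1) := by
  refine Finset.sum_congr rfl fun d hd => ?_
  have ha : ∀ c ∈ TF n, ∀ b ∈ TF n, ∑ a ∈ TF n, F1 a b c d
      = tl c d * (tl b c * ((3 - eqi b c - eqi c d) * A2 b.1 - 1)) := by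
    intro c _ b hb
    simp only [F1]
    have e1 := tl_sum_eqi n (fun _ => 1) b hb
    rw [← Finset.mul_sum, ← Finset.mul_sum]
    congr 2
    conv_rhs => rw [← e1]
    rw [← sum_A2 n b hb, Finset.mul_sum, ← Finset.sum_sub_distrib]
    exact Finset.sum_congr rfl fun a _ => by ring
  have hb : ∀ c ∈ TF n, ∑ b ∈ TF n, ∑ a ∈ TF n, F1 a b c d
      = tl c d * ((3 - eqi c d) * A3 c.1 - 2 * A2 c.1) := by
    intro c hc
    rw [Finset.sum_congr rfl (ha c hc), ← Finset.mul_sum]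
    congr 1
    have e1 := tl_sum_eqi n (fun x => A2 x.1) c hc
    have e2 := sum_A2 n c hc
    have e3 := sum_A3 n c hc
    have : (3 - eqi c d) * A3 c.1 - 2 * A2 c.1 = (3 - eqi c d) * A3 c.1 - A2 c.1 - A2 c.1 := by
      ring
    rw [this]
    conv_rhs => rw [← e3]; arg 1; arg 2; rw [← e1]
    rw [← e2, Finset.mul_sum, ← Finset.sum_sub_distrib, ← Finset.sum_sub_distrib]
    exact Finset.sum_congr rfl fun b _ => by ring
  rw [Finset.sum_congr rfl hb]
  have e1 := tl_sum_eqi n (fun x => A3 x.1) d hd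
  have e2 := sum_A3 n d hd
  have e3 := sum_A4 n d hd
  have : 3 * (A4 d.1 - A3 d.1) = 3 * A4 d.1 - A3 d.1 - 2 * A3 d.1 := by ring
  rw [this]
  conv_rhs => rw [← e3]; arg 1; arg 2; rw [← e1]
  rw [← e2, Finset.mul_sum, Finset.mul_sum, ← Finset.sum_sub_distrib, ← Finset.sum_sub_distrib]
  exact Finset.sum_congr rfl fun b _ => by ring

/-- For an incomparable pair `x, y`, the elements below both are those below the meet. -/
theorem tl_meet (z x y : ℤ × ℤ) (h : inc x y) :
    tl z x * tl z y = tl z (x.1 + x.2 - y.2, y.2) := by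
  unfold inc at h
  have : tle z (x.1 + x.2 - y.2, y.2) ↔ tle z x ∧ tle z y := by
    simp only [tle]; omega
  simp only [tl, this, ite_and]
  split_ifs <;> simp

/-- The meet of `x, y` may have rank `≤ 0` and so lie outside `T_n`; then no element of `T_n` is
below both. -/
theorem sum_meet (n : ℕ) (φ Φ : ℤ → ℚ) (h0 : Φ 0 = 0) (h1 : Φ (-1) = 0)
    (hs : ∀ k, Φ k - 2 * Φ (k - 1) + Φ (k - 2) = φ k)
    (x y : ℤ × ℤ) (hx : x ∈ TF n) (hy : y ∈ TF n) :
    ic x y * ∑ z ∈ TF n, tl z x * tl z y * φ z.1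
      = ic x y * if 1 ≤ x.1 + x.2 - y.2 then Φ (x.1 + x.2 - y.2) else 0 := by
  by_cases h : inc x y
  · congr 1
    rw [← tl_sum n φ Φ h0 h1 hs (x.1 + x.2 - y.2, y.2)]
    · exact Finset.sum_congr rfl fun z _ => by rw [tl_meet z x y h]
    all_goals
      simp only [mem_TF, inT, inc] at *
      omega
  · simp [ic, h]

/-- Incomparable pairs of `T_n` whose meet has positive rank, parametrized by that meet
`(r, j)`: they are `(r + p, j - p), (r + q, j)` with `p, q ≥ 1`. For given `r, p, q` there are
`4 * n + 1 - r - p - q` choices of `j`. -/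
theorem sum_pairs_meet (n : ℕ) (φ : ℤ → ℚ) :
    ∑ y ∈ TF n, ∑ x ∈ TF n,
      ic x y * (if 1 ≤ x.1 + x.2 - y.2 then φ (x.1 + x.2 - y.2) else 0)
    = ∑ r ∈ Finset.Icc (1 : ℤ) (2 * n + 1), (2 * (n : ℚ) - 1) * (2 * n + 1 - r) ^ 2 * φ r := by
  have hr : ∀ r ∈ Finset.Icc (1 : ℤ) (2 * n + 1),
      (2 * (n : ℚ) - 1) * (2 * n + 1 - r) ^ 2 * φ r
      = ∑ p ∈ Finset.Icc (1 : ℤ) (2 * n + 1 - r), ∑ q ∈ Finset.Icc (1 : ℤ) (2 * n + 1 - r),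
        ∑ _j ∈ Finset.Icc (1 + p) (4 * n + 1 - r - q), φ r := by
    intro r hr
    rw [Finset.mem_Icc] at hr
    have hp : ∀ p ∈ Finset.Icc (1 : ℤ) (2 * n + 1 - r),
        ∑ q ∈ Finset.Icc (1 : ℤ) (2 * n + 1 - r),
        ∑ _j ∈ Finset.Icc (1 + p) (4 * n + 1 - r - q), φ r
        = ((2 * n + 1 - r) * (4 * n + 1 - r - p)
            - (2 * n + 1 - r) * (2 * n + 2 - r) / 2) * φ r := by
      intro p hp
      rw [Finset.mem_Icc] at hp
      have hq : ∀ q ∈ Finset.Icc (1 : ℤ) (2 * n + 1 - r),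
          ∑ _j ∈ Finset.Icc (1 + p) (4 * n + 1 - r - q), φ r
          = (4 * n + 1 - r - p - q) * φ r := by
        intro q hq
        rw [Finset.mem_Icc] at hq
        rw [sum_Icc_const _ _ (by omega)]
        push_cast; ring
      rw [Finset.sum_congr rfl hq, sum_Icc_eq _
        (fun k => (k * (4 * n + 1 - r - p) - k * (k + 1) / 2) * φ r) (by simp)
        (by intro k; push_cast; ring) _ (by omega)]
      push_cast; ring
    rw [Finset.sum_congr rfl hp, sum_Icc_eq _
      (fun k => (k * (2 * n + 1 - r) * (4 * n + 1 - r) - (2 * n + 1 - r) * (k * (k + 1) / 2)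
        - k * (2 * n + 1 - r) * (2 * n + 2 - r) / 2) * φ r) (by simp)
      (by intro k; push_cast; ring) _ (by omega)]
    push_cast; ring
  rw [Finset.sum_congr rfl hr]
  simp only [Finset.sum_sigma']
  have : ∀ z : (_ : ℤ × ℤ) × (ℤ × ℤ), ic z.2 z.1 * (if 1 ≤ z.2.1 + z.2.2 - z.1.2 then
      φ (z.2.1 + z.2.2 - z.1.2) else 0)
      = if inc z.2 z.1 ∧ 1 ≤ z.2.1 + z.2.2 - z.1.2 then φ (z.2.1 + z.2.2 - z.1.2) else 0 := by
    intro z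
    simp only [ic, ite_and, ite_mul, one_mul, zero_mul]
  simp only [this]
  rw [← Finset.sum_filter]
  refine Finset.sum_nbij'
    (fun z => ⟨z.2.1 + z.2.2 - z.1.2, z.1.2 - z.2.2, z.1.1 - (z.2.1 + z.2.2 - z.1.2), z.1.2⟩)
    (fun w => ⟨(w.1 + w.2.2.1, w.2.2.2), (w.1 + w.2.1, w.2.2.2 - w.2.1)⟩) ?_ ?_ ?_ ?_ ?_
  · rintro ⟨⟨y1, y2⟩, ⟨x1, x2⟩⟩ hz
    simp only [mem_TF, Finset.mem_filter, Finset.mem_sigma, Finset.mem_Icc] at hz ⊢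
    simp only [inT, inc] at hz ⊢
    omega
  · rintro ⟨r, p, q, j⟩ hz
    simp only [mem_TF, Finset.mem_filter, Finset.mem_sigma, Finset.mem_Icc] at hz ⊢
    simp only [inT, inc] at hz ⊢
    omega
  · rintro ⟨⟨y1, y2⟩, ⟨x1, x2⟩⟩ hz
    simp
  · rintro ⟨r, p, q, j⟩ hz
    simp
  · rintro ⟨⟨y1, y2⟩, ⟨x1, x2⟩⟩ hz
    simp

theorem sum_F2 (n : ℕ) :
    ∑ d ∈ TF n, ∑ c ∈ TF n, ∑ b ∈ TF n, ∑ a ∈ TF n, F2 a b c d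
      = ∑ r ∈ Finset.Icc (1 : ℤ) (2 * n + 1), (2 * (n : ℚ) - 1) * (2 * n + 1 - r) ^ 2 * A3 r := by
  rw [← sum_pairs_meet]
  refine Finset.sum_congr rfl fun d hd => Finset.sum_congr rfl fun c hc => ?_
  rw [← sum_meet n A2 A3 (by simp [A3]) (by simp [A3]) A3_diff c d hc hd, Finset.mul_sum]
  refine Finset.sum_congr rfl fun b hb => ?_
  rw [← sum_A2 n b hb, Finset.mul_sum, Finset.mul_sum]
  rfl

/-- Number of configurations `F3` with top of rank `i`. -/
def M6 (i : ℤ) : ℚ := (i - 2) * (i - 1) * i * (i + 1) * (i + 2) * (i + 3) / 720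

/-- Incomparable pairs below `d`, parametrized by their meet `(r, d.2 + v)` and weighted
by the number of elements below that meet. -/
theorem sum_pairs_below (n : ℕ) (d : ℤ × ℤ) (hd : d ∈ TF n) :
    ∑ c ∈ TF n, ∑ b ∈ TF n, tl b d * tl c d *
      (ic b c * (if 1 ≤ b.1 + b.2 - c.2 then A2 (b.1 + b.2 - c.2) else 0)) = M6 d.1 := by
  rw [mem_TF, inT] at hd
  have hr : ∀ r ∈ Finset.Icc (1 : ℤ) d.1,
      ∑ v ∈ Finset.Icc (1 : ℤ) (d.1 - r), ∑ _p ∈ Finset.Icc (1 : ℤ) v,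
        ∑ _q ∈ Finset.Icc (1 : ℤ) (d.1 - r - v), A2 r
      = ((d.1 : ℚ) - r - 1) * (d.1 - r) * (d.1 - r + 1) / 6 * A2 r := by
    intro r hr
    rw [Finset.mem_Icc] at hr
    have hv : ∀ v ∈ Finset.Icc (1 : ℤ) (d.1 - r), ∑ _p ∈ Finset.Icc (1 : ℤ) v,
        ∑ _q ∈ Finset.Icc (1 : ℤ) (d.1 - r - v), A2 r = v * (d.1 - r - v) * A2 r := by
      intro v hv
      rw [Finset.mem_Icc] at hv
      rw [sum_Icc_const _ _ (by omega), sum_Icc_const _ _ (by omega)]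
      push_cast; ring
    rw [Finset.sum_congr rfl hv, sum_Icc_eq _
      (fun k => (k * (k + 1) / 2 * (d.1 - r) - k * (k + 1) * (2 * k + 1) / 6) * A2 r) (by simp)
      (by intro k; push_cast; ring) _ (by omega)]
    push_cast; ring
  have hM : M6 d.1 = ∑ r ∈ Finset.Icc (1 : ℤ) d.1,
      ((d.1 : ℚ) - r - 1) * (d.1 - r) * (d.1 - r + 1) / 6 * A2 r := by
    -- antidifference in the upper limit, a polynomial also in `i = d.1`
    rw [sum_Icc_eq _ (fun k => let i : ℚ := d.1
      (12 * k - 46 * k * i - 30 * k * i ^ 2 + 40 * k * i ^ 3 + 50 * k ^ 2 - 15 * k ^ 2 * i - 135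
        * k ^ 2 * i ^ 2 + 60 * k ^ 2 * i ^ 3 + 30 * k ^ 3 + 130 * k ^ 3 * i - 150 * k ^ 3 * i ^ 2
        + 20 * k ^ 3 * i ^ 3 - 40 * k ^ 4 + 135 * k ^ 4 * i - 45 * k ^ 4 * i ^ 2 - 42 * k ^ 5 + 36
        * k ^ 5 * i - 10 * k ^ 6) / 720) (by simp)
      (by intro k; simp only [A2]; push_cast; ring) _ (by omega)]
    simp only [M6]
    ring
  rw [hM, ← Finset.sum_congr rfl hr]
  simp only [Finset.sum_sigma']
  have : ∀ z : (_ : ℤ × ℤ) × (ℤ × ℤ), tl z.2 d * tl z.1 d * (ic z.2 z.1 *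
      (if 1 ≤ z.2.1 + z.2.2 - z.1.2 then A2 (z.2.1 + z.2.2 - z.1.2) else 0))
      = if tle z.2 d ∧ tle z.1 d ∧ inc z.2 z.1 ∧ 1 ≤ z.2.1 + z.2.2 - z.1.2 then
        A2 (z.2.1 + z.2.2 - z.1.2) else 0 := by
    intro z
    simp only [tl, ic, ite_and, ite_mul, one_mul, zero_mul]
  simp only [this]
  rw [← Finset.sum_filter]
  refine Finset.sum_nbij'
    (fun z => ⟨z.2.1 + z.2.2 - z.1.2, z.1.2 - d.2, z.1.2 - z.2.2,
      z.1.1 - (z.2.1 + z.2.2 - z.1.2)⟩)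
    (fun w => ⟨(w.1 + w.2.2.2, d.2 + w.2.1), (w.1 + w.2.2.1, d.2 + w.2.1 - w.2.2.1)⟩)
    ?_ ?_ ?_ ?_ ?_
  · rintro ⟨⟨y1, y2⟩, ⟨x1, x2⟩⟩ hz
    simp only [mem_TF, Finset.mem_filter, Finset.mem_sigma, Finset.mem_Icc] at hz ⊢
    simp only [inT, inc, tle] at hz ⊢
    omega
  · rintro ⟨r, v, p, q⟩ hz
    simp only [mem_TF, Finset.mem_filter, Finset.mem_sigma, Finset.mem_Icc] at hz ⊢
    simp only [inT, inc, tle] at hz ⊢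
    omega
  · rintro ⟨⟨y1, y2⟩, ⟨x1, x2⟩⟩ hz
    simp
  · rintro ⟨r, v, p, q⟩ hz
    simp
  · rintro ⟨⟨y1, y2⟩, ⟨x1, x2⟩⟩ hz
    simp

theorem sum_F3 (n : ℕ) :
    ∑ d ∈ TF n, ∑ c ∈ TF n, ∑ b ∈ TF n, ∑ a ∈ TF n, F3 a b c d = ∑ d ∈ TF n, M6 d.1 := by
  refine Finset.sum_congr rfl fun d hd => ?_
  rw [← sum_pairs_below n d hd]
  refine Finset.sum_congr rfl fun c hc => Finset.sum_congr rfl fun b hb => ?_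
  rw [← sum_meet n (fun _ => 1) A2 (by simp [A2]) (by simp [A2])
    (by intro k; simp only [A2]; push_cast; ring) b c hb hc, Finset.mul_sum, Finset.mul_sum]
  refine Finset.sum_congr rfl fun a _ => ?_
  simp only [F3]
  ring

/-- Number of incomparable pairs below an element of rank `i`. -/
def B2 (i : ℤ) : ℚ :=
  ((i - 1) * i * (i + 1) * (i + 2) + (i - 2) * (i - 1) * i * (i + 1)) / 24
/-- Number of configurations `F4` with top of rank `i`. -/
def B3 (i : ℤ) : ℚ := ((i - 1) * i * (i + 1) * (i + 2) * (i + 3) * (i + 4)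
  + (i - 2) * (i - 1) * i * (i + 1) * (i + 2) * (i + 3)) / 720

/-- Incomparable pairs below `c`, parametrized by their join `J`, which lies in `T_n`: a join of
rank `i` has `(i - 1) ^ 2` such pairs. -/
theorem sum_pairs_join (n : ℕ) (c : ℤ × ℤ) (hc : c ∈ TF n) :
    ∑ b ∈ TF n, ∑ a ∈ TF n, ic a b * tl a c * tl b c = B2 c.1 := by
  rw [← tl_sum_mem n (fun i => ((i : ℚ) - 1) ^ 2) B2 (by simp [B2]) (by simp [B2])
    (by intro k; simp only [B2]; push_cast; ring) c hc]
  rw [mem_TF, inT] at hc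
  have hJ : ∀ J ∈ TF n, tl J c * ((J.1 : ℚ) - 1) ^ 2
      = ∑ _p ∈ Finset.Icc 1 (J.1 - 1), ∑ _q ∈ Finset.Icc 1 (J.1 - 1), tl J c := by
    intro J hJ
    rw [mem_TF, inT] at hJ
    rw [sum_Icc_const _ _ (by omega), sum_Icc_const _ _ (by omega)]
    push_cast; ring
  rw [Finset.sum_congr rfl hJ]
  simp only [Finset.sum_sigma']
  have : ∀ z : (_ : ℤ × ℤ) × (ℤ × ℤ), ic z.2 z.1 * tl z.2 c * tl z.1 c
      = if inc z.2 z.1 ∧ tle z.2 c ∧ tle z.1 c then 1 else 0 := by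
    intro z
    simp only [tl, ic, ite_and, ite_mul, one_mul, zero_mul]
  simp only [this]
  simp only [tl]
  rw [← Finset.sum_filter, ← Finset.sum_filter]
  refine Finset.sum_nbij'
    (fun z => ⟨(z.1.1 + z.1.2 - z.2.2, z.2.2), z.1.1 + z.1.2 - z.2.2 - z.2.1, z.1.2 - z.2.2⟩)
    (fun w => ⟨(w.1.1 - w.2.2, w.1.2 + w.2.2), (w.1.1 - w.2.1, w.1.2)⟩)
    ?_ ?_ ?_ ?_ ?_
  · rintro ⟨⟨y1, y2⟩, ⟨x1, x2⟩⟩ hz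
    simp only [mem_TF, Finset.mem_filter, Finset.mem_sigma, Finset.mem_Icc] at hz ⊢
    simp only [inT, inc, tle] at hz ⊢
    omega
  · rintro ⟨⟨r, j⟩, p, q⟩ hz
    simp only [mem_TF, Finset.mem_filter, Finset.mem_sigma, Finset.mem_Icc] at hz ⊢
    simp only [inT, inc, tle] at hz ⊢
    omega
  · rintro ⟨⟨y1, y2⟩, ⟨x1, x2⟩⟩ hz
    simp
  · rintro ⟨⟨r, j⟩, p, q⟩ hz
    simp
  · intro z _
    rfl

theorem sum_F4 (n : ℕ) :
    ∑ d ∈ TF n, ∑ c ∈ TF n, ∑ b ∈ TF n, ∑ a ∈ TF n, F4 a b c d = ∑ d ∈ TF n, B3 d.1 := by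
  refine Finset.sum_congr rfl fun d hd => ?_
  rw [← tl_sum_mem n B2 B3 (by simp [B3]) (by simp [B3])
    (by intro k; simp only [B2, B3]; push_cast; ring) d hd]
  refine Finset.sum_congr rfl fun c hc => ?_
  rw [← sum_pairs_join n c hc]
  simp only [F4, Finset.mul_sum]

theorem choose_seven (n : ℕ) : (Nat.choose (2 * n + 6) 7 : ℚ)
    = (2 * n + 6) * (2 * n + 5) * (2 * n + 4) * (2 * n + 3) * (2 * n + 2) * (2 * n + 1) * (2 * n)
      / 5040 := by
  have h := Nat.descFactorial_eq_factorial_mul_choose (2 * n + 6) 7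
  have h' := congrArg (Nat.cast : ℕ → ℚ) h
  simp [Nat.descFactorial_succ, Nat.factorial] at h'
  linarith

theorem total (n : ℕ) :
    ∑ d ∈ TF n, ∑ c ∈ TF n, ∑ b ∈ TF n, ∑ a ∈ TF n,
      (F1 a b c d + F2 a b c d + F3 a b c d + F4 a b c d)
      = 7 * (10 * (n : ℚ) - 1) / 4 * (Nat.choose (2 * n + 6) 7 : ℚ) := by
  simp only [Finset.sum_add_distrib]
  rw [sum_F1, sum_F2, sum_F3, sum_F4, sum_TF n (fun i => 3 * (A4 i - A3 i)), sum_TF, sum_TF,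
    ← Finset.sum_add_distrib, ← Finset.sum_add_distrib, ← Finset.sum_add_distrib, choose_seven]
  -- antidifference of the summand, a polynomial also in `n`
  rw [sum_Icc_eq _ (fun k =>
    (-720 * k - 3264 * k * n + 1536 * k * n ^ 2 + 4608 * k * n ^ 3 + 12 * k ^ 2 - 4688 * k ^ 2
      * n - 640 * k ^ 2 * n ^ 2 + 9600 * k ^ 2 * n ^ 3 + 1380 * k ^ 3 + 792 * k ^ 3 * n - 5760 *
      k ^ 3 * n ^ 2 + 6720 * k ^ 3 * n ^ 3 + 333 * k ^ 4 + 4120 * k ^ 4 * n - 4960 * k ^ 4 * n ^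
      2 + 1920 * k ^ 4 * n ^ 3 - 600 * k ^ 5 + 2424 * k ^ 5 * n - 1536 * k ^ 5 * n ^ 2 + 192 * k
      ^ 5 * n ^ 3 - 342 * k ^ 6 + 568 * k ^ 6 * n - 160 * k ^ 6 * n ^ 2 - 60 * k ^ 7 + 48 * k ^
      7 * n - 3 * k ^ 8) / 2880) (by simp)
    (by intro k; simp only [A3, A4, M6, B3]; push_cast; ring) _ (by omega)]
  push_cast
  ring

/-! ### Reduction to sorted quadruples -/

/-- A linear extension of `⊴`: increasing `i + j`, ties broken by decreasing `j`. -/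
def lle (a b : ℤ × ℤ) : Prop :=
  a.1 + a.2 < b.1 + b.2 ∨ (a.1 + a.2 = b.1 + b.2 ∧ b.2 ≤ a.2)

instance : DecidableRel lle := fun a b => by unfold lle; infer_instance
instance : IsTrans (ℤ × ℤ) lle := ⟨fun a b c => by unfold lle; omega⟩
instance : Std.Antisymm lle := ⟨fun a b h1 h2 => by
  unfold lle at h1 h2; exact Prod.ext (by omega) (by omega)⟩
instance : Std.Total lle := ⟨fun a b => by unfold lle; omega⟩

theorem lle_tle {a b : ℤ × ℤ} (h : lle a b) : tle a b ↔ b.2 ≤ a.2 := by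
  unfold lle at h; unfold tle; omega

theorem lle_tle' {a b : ℤ × ℤ} (h : lle a b) : tle a b ∨ tle b a ↔ b.2 ≤ a.2 := by
  unfold lle at h; unfold tle; omega

theorem lle_inc {a b : ℤ × ℤ} (h : lle a b) : inc a b ↔ ¬ b.2 ≤ a.2 := by
  unfold lle at h; unfold inc; omega

theorem lle_of_tle {a b : ℤ × ℤ} (h : tle a b) : lle a b := by
  unfold tle at h; unfold lle; omega

theorem lle_of_inc {a b : ℤ × ℤ} (h : inc a b) : lle a b := by
  unfold inc at h; unfold lle; omega

/-- A sorted triple is a chain iff its second coordinates decrease weakly. -/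
theorem chain_triple {a b c : ℤ × ℤ} (hab : lle a b) (hbc : lle b c) :
    isChainF ({a, b, c} : Multiset (ℤ × ℤ)).toFinset ↔ b.2 ≤ a.2 ∧ c.2 ≤ b.2 := by
  constructor
  · intro h
    exact ⟨(lle_tle' hab).1 (h a (by simp) b (by simp)),
      (lle_tle' hbc).1 (h b (by simp) c (by simp))⟩
  · rintro ⟨h1, h2⟩ x hx y hy
    simp only [Multiset.insert_eq_cons, Multiset.mem_toFinset, Multiset.mem_cons,
      Multiset.mem_singleton] at hx hy
    unfold lle at hab hbc
    unfold tle
    rcases hx with rfl | rfl | rfl <;> rcases hy with rfl | rfl | rfl <;> omega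

open Classical in
/-- The 3-submultisets of a 4-multiset arise by deleting one element of the support, and distinct
elements give distinct submultisets. -/
theorem e_eq_sum (P : Multiset (ℤ × ℤ)) (hP : Multiset.card P = 4) :
    e P = ∑ x ∈ P.toFinset, if isChainF (P.erase x).toFinset then 1 else 0 := by
  have hset : {ρ : Multiset (ℤ × ℤ) | ρ ≤ P ∧ Multiset.card ρ = 3 ∧ isChainF ρ.toFinset}
      = ((P.toFinset.filter fun x => isChainF (P.erase x).toFinset).image
          fun x => P.erase x : Finset (Multiset (ℤ × ℤ))) := by
    ext ρ
    simp only [Set.mem_ofPred_eq, Finset.coe_image, Set.mem_image, Finset.coe_filter,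
      Multiset.mem_toFinset]
    constructor
    · rintro ⟨hle, hc, hch⟩
      obtain ⟨u, rfl⟩ := Multiset.le_iff_exists_add.1 hle
      rw [Multiset.card_add, hc] at hP
      obtain ⟨x, rfl⟩ := Multiset.card_eq_one.1 (show Multiset.card u = 1 by omega)
      have : (ρ + {x}).erase x = ρ := by
        rw [add_comm, Multiset.singleton_add, Multiset.erase_cons_head]
      exact ⟨x, ⟨by simp, by rwa [this]⟩, this⟩
    · rintro ⟨x, ⟨hx, hch⟩, rfl⟩
      refine ⟨Multiset.erase_le _ _, ?_, hch⟩
      rw [Multiset.card_erase_of_mem hx, hP]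
      rfl
  rw [e, hset, Set.ncard_coe_finset, Finset.card_image_of_injOn, Finset.card_filter]
  intro x hx y hy hxy
  simp only [Finset.coe_filter, Set.mem_ofPred_eq, Multiset.mem_toFinset] at hx hy
  have h1 := Multiset.cons_erase hx.1
  have h2 := Multiset.cons_erase hy.1
  simp only at hxy
  rw [← hxy] at h2
  exact (Multiset.cons_inj_left _).1 (h1.trans h2.symm)

theorem sum_sorted {a b c d : ℤ × ℤ} (hab : lle a b) (hbc : lle b c) (hcd : lle c d)
    (g : ℤ × ℤ → ℕ) :
    ∑ x ∈ ({a, b, c, d} : Multiset (ℤ × ℤ)).toFinset, g x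
      = g d + (if c = d then 0 else g c) + (if b = c then 0 else g b)
        + (if a = b then 0 else g a) := by
  have hac : lle a c := IsTrans.trans _ _ _ hab hbc
  have hbd : lle b d := IsTrans.trans _ _ _ hbc hcd
  have had : lle a d := IsTrans.trans _ _ _ hab hbd
  have h1 : c ∈ ({d} : Finset (ℤ × ℤ)) ↔ c = d := by simp
  have h2 : b ∈ (insert c {d} : Finset (ℤ × ℤ)) ↔ b = c := by
    simp only [Finset.mem_insert, Finset.mem_singleton, or_iff_left_iff_imp]
    rintro rfl
    exact antisymm hbc hcd
  have h3 : a ∈ (insert b (insert c {d}) : Finset (ℤ × ℤ)) ↔ a = b := by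
    simp only [Finset.mem_insert, Finset.mem_singleton, or_iff_left_iff_imp]
    rintro (rfl | rfl)
    · exact antisymm hab hbc
    · exact antisymm hab hbd
  have key : ∀ (x : ℤ × ℤ) (s : Finset (ℤ × ℤ)) (p : Prop) [Decidable p], (x ∈ s ↔ p) →
      ∑ y ∈ insert x s, g y = ∑ y ∈ s, g y + if p then 0 else g x := by
    intro x s p _ hp
    split_ifs with h
    · rw [Finset.insert_eq_of_mem (hp.2 h), add_zero]
    · rw [Finset.sum_insert (fun hx => h (hp.1 hx)), add_comm]
  have : ({a, b, c, d} : Multiset (ℤ × ℤ)).toFinset = insert a (insert b (insert c {d})) := by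
    ext x; simp
  rw [this, key a _ _ h3, key b _ _ h2, key c _ _ h1, Finset.sum_singleton]

/-- On sorted quadruples the excess is the sum of the four contributions. -/
theorem N_sorted {a b c d : ℤ × ℤ} (hab : lle a b) (hbc : lle b c) (hcd : lle c d) :
    (N {a, b, c, d} : ℚ) = F1 a b c d + F2 a b c d + F3 a b c d + F4 a b c d := by
  have hac : lle a c := IsTrans.trans _ _ _ hab hbc
  have hbd : lle b d := IsTrans.trans _ _ _ hbc hcd
  have ea : ({a, b, c, d} : Multiset (ℤ × ℤ)).erase a = {b, c, d} := Multiset.erase_cons_head _ _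
  have eb : ({a, b, c, d} : Multiset (ℤ × ℤ)).erase b = {a, c, d} := by
    have : ({a, b, c, d} : Multiset (ℤ × ℤ)) = b ::ₘ {a, c, d} := Multiset.cons_swap _ _ _
    rw [this, Multiset.erase_cons_head]
  have ec : ({a, b, c, d} : Multiset (ℤ × ℤ)).erase c = {a, b, d} := by
    have : ({a, b, c, d} : Multiset (ℤ × ℤ)) = c ::ₘ {a, b, d} := by
      simp only [Multiset.insert_eq_cons, Multiset.cons_swap c]
    rw [this, Multiset.erase_cons_head]
  have ed : ({a, b, c, d} : Multiset (ℤ × ℤ)).erase d = {a, b, c} := by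
    have : ({a, b, c, d} : Multiset (ℤ × ℤ)) = d ::ₘ {a, b, c} := by
      show (↑[a, b, c, d] : Multiset (ℤ × ℤ)) = ↑[d, a, b, c]
      exact Multiset.coe_eq_coe.2 (List.perm_append_comm (l₁ := [a, b, c]) (l₂ := [d]))
    rw [this, Multiset.erase_cons_head]
  rw [N, e_eq_sum _ (by simp), sum_sorted hab hbc hcd, ea, eb, ec, ed]
  simp only [chain_triple hab hbc, chain_triple hab hbd, chain_triple hac hcd,
    chain_triple hbc hcd, F1, F2, F3, F4, tl, ic, eqi, lle_tle hab, lle_tle hbc, lle_tle hcd,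
    lle_tle hac, lle_tle hbd, lle_inc hab, lle_inc hbc, lle_inc hcd]
  have qab : (a = b) = True → a.2 = b.2 := fun h => congrArg _ (of_eq_true h)
  have qbc : (b = c) = True → b.2 = c.2 := fun h => congrArg _ (of_eq_true h)
  have qcd : (c = d) = True → c.2 = d.2 := fun h => congrArg _ (of_eq_true h)
  -- both sides depend only on which neighbours coincide and on the relative order of the second
  -- coordinates, so a finite case check remains
  rcases Classical.propComplete (a = b) with k1 | k1 <;>
  rcases Classical.propComplete (b = c) with k2 | k2 <;>
  rcases Classical.propComplete (c = d) with k3 | k3 <;>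
  simp only [k1, k2, k3, forall_const, if_true, if_false] at qab qbc qcd ⊢ <;>
  by_cases h1 : b.2 ≤ a.2 <;> by_cases h2 : c.2 ≤ b.2 <;> by_cases h3 : d.2 ≤ c.2 <;>
  by_cases h4 : c.2 ≤ a.2 <;> by_cases h5 : d.2 ≤ b.2 <;>
  first
  | omega
  | (simp [h1, h2, h3, h4, h5] <;> norm_num)

theorem F_unsorted {a b c d : ℤ × ℤ} (h : ¬ (lle a b ∧ lle b c ∧ lle c d)) :
    F1 a b c d + F2 a b c d + F3 a b c d + F4 a b c d = 0 := by
  have ht : ∀ {x y}, ¬ lle x y → tl x y = 0 := fun hxy => if_neg fun h => hxy (lle_of_tle h)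
  have hi : ∀ {x y}, ¬ lle x y → ic x y = 0 := fun hxy => if_neg fun h => hxy (lle_of_inc h)
  simp only [not_and_or] at h
  simp only [F1, F2, F3, F4]
  rcases h with h | h | h <;> simp [ht h, hi h]

/-- Every 4-multiset is enumerated by exactly one quadruple sorted for `lle`. -/
theorem NT_eq (n : ℕ) :
    (NT n : ℚ) = ∑ d ∈ TF n, ∑ c ∈ TF n, ∑ b ∈ TF n, ∑ a ∈ TF n,
      (F1 a b c d + F2 a b c d + F3 a b c d + F4 a b c d) := by
  let Q : Finset ((ℤ × ℤ) × (ℤ × ℤ) × (ℤ × ℤ) × (ℤ × ℤ)) :=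
    (TF n ×ˢ TF n ×ˢ TF n ×ˢ TF n).filter
      fun q => lle q.2.2.2 q.2.2.1 ∧ lle q.2.2.1 q.2.1 ∧ lle q.2.1 q.1
  have hbij : Set.BijOn
      (fun q : (ℤ × ℤ) × (ℤ × ℤ) × (ℤ × ℤ) × (ℤ × ℤ) =>
        ({q.2.2.2, q.2.2.1, q.2.1, q.1} : Multiset (ℤ × ℤ)))
      (Q : Set ((ℤ × ℤ) × (ℤ × ℤ) × (ℤ × ℤ) × (ℤ × ℤ)))
      {P : Multiset (ℤ × ℤ) | Multiset.card P = 4 ∧ ∀ a ∈ P, inT n a} := by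
    have hpw : ∀ {a b c d : ℤ × ℤ}, lle a b → lle b c → lle c d →
        List.Pairwise lle [a, b, c, d] := by
      intro a b c d hab hbc hcd
      have hac : lle a c := IsTrans.trans _ _ _ hab hbc
      have hbd : lle b d := IsTrans.trans _ _ _ hbc hcd
      have had : lle a d := IsTrans.trans _ _ _ hab hbd
      simp [*]
    refine ⟨?_, ?_, ?_⟩
    · rintro ⟨d, c, b, a⟩ hq
      simp only [Q, Finset.coe_filter, Set.mem_ofPred_eq, Finset.mem_product, mem_TF] at hq
      refine ⟨by simp, ?_⟩
      intro x hx
      simp only [Multiset.insert_eq_cons, Multiset.mem_cons, Multiset.mem_singleton] at hx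
      obtain ⟨⟨hd, hc, hb, ha⟩, -⟩ := hq
      rcases hx with rfl | rfl | rfl | rfl <;> assumption
    · rintro ⟨d, c, b, a⟩ hq ⟨d', c', b', a'⟩ hq' heq
      simp only [Q, Finset.coe_filter, Set.mem_ofPred_eq] at hq hq'
      have hperm : List.Perm [a, b, c, d] [a', b', c', d'] := Multiset.coe_eq_coe.1 heq
      have := hperm.eq_of_pairwise' (r := lle) (hpw hq.2.1 hq.2.2.1 hq.2.2.2)
        (hpw hq'.2.1 hq'.2.2.1 hq'.2.2.2)
      simp only [List.cons.injEq, and_true] at this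
      obtain ⟨rfl, rfl, rfl, rfl⟩ := this
      rfl
    · rintro P ⟨hcard, hP⟩
      have hlen : (P.sort lle).length = 4 := by rw [Multiset.length_sort, hcard]
      have hs := Multiset.pairwise_sort P lle
      have he := Multiset.sort_eq P lle
      obtain ⟨a, b, c, d, hl⟩ := List.length_eq_four.1 hlen
      rw [hl] at hs he
      simp only [List.pairwise_cons, List.mem_cons, List.not_mem_nil, or_false] at hs
      have hmem : ∀ x ∈ [a, b, c, d], x ∈ TF n := by
        intro x hx
        rw [mem_TF]
        exact hP x (by rw [← he]; exact hx)
      refine ⟨(d, c, b, a), ?_, he⟩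
      simp only [Q, Finset.coe_filter, Set.mem_ofPred_eq, Finset.mem_product]
      exact ⟨⟨hmem d (by simp), hmem c (by simp), hmem b (by simp), hmem a (by simp)⟩,
        hs.1 b (by simp), hs.2.1 c (by simp), hs.2.2.1 d (by simp)⟩
  have hNT : NT n = ∑ q ∈ Q, N {q.2.2.2, q.2.2.1, q.2.1, q.1} := by
    rw [NT, ← finsum_mem_eq_of_bijOn _ hbij (fun _ _ => rfl), finsum_mem_coe_finset]
  have hprod : ∑ d ∈ TF n, ∑ c ∈ TF n, ∑ b ∈ TF n, ∑ a ∈ TF n,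
      (F1 a b c d + F2 a b c d + F3 a b c d + F4 a b c d)
      = ∑ q ∈ TF n ×ˢ TF n ×ˢ TF n ×ˢ TF n, (F1 q.2.2.2 q.2.2.1 q.2.1 q.1
        + F2 q.2.2.2 q.2.2.1 q.2.1 q.1 + F3 q.2.2.2 q.2.2.1 q.2.1 q.1
        + F4 q.2.2.2 q.2.2.1 q.2.1 q.1) := by
    simp only [Finset.sum_product]
  rw [hNT, hprod, Nat.cast_sum, Finset.sum_filter]
  refine Finset.sum_congr rfl fun q _ => ?_
  split_ifs with h
  · exact N_sorted h.1 h.2.1 h.2.2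
  · exact (F_unsorted h).symm

theorem stmt19 (n : ℕ) (hn : 1 ≤ n) :
    (NT n : ℚ) = 7*(10*(n:ℚ)-1)/4 * (Nat.choose (2*n+6) 7 : ℚ) ∧ NT 1 = 126 := by
  refine ⟨by rw [NT_eq, total], ?_⟩
  have h : (NT 1 : ℚ) = 126 := by
    rw [NT_eq, total]
    norm_num [Nat.choose]
  exact_mod_cast h
end
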